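/- Let B be a block with n vertices and G the graph obtained by attaching k whiskers at vertices v_1, ..., v_k. Suppose G is accessible and that for every cut vertex w of G there is a cut set of G \ {w} containing N_B(w). Let v be a cut vertex of G and let r = |N_H[v]| where H is the induced subgraph of G on {v_1, ..., v_k}. Then |N_B(v)| ≤ ⌊(n + r)/2⌋ − 2; in particular |N_B(v)| ≤ ⌊(n + k)/2⌋ − 2. -/

import Mathlib

open SimpleGraph Finset

variable {V : Type*}

/-- Number of connected components of the induced subgraph on the complement of `S`. -/
noncomputable def ncomp (G : SimpleGraph V) (S : Finset V) : ℕ :=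
  Nat.card ((G.induce {v | v ∉ S}).ConnectedComponent)

/-- `S` is a cut set of `G`. -/
def cutSet [DecidableEq V] (G : SimpleGraph V) (S : Finset V) : Prop :=
  S = ∅ ∨ ∀ i ∈ S, ncomp G (S.erase i) < ncomp G S

/-- `G` is combinatorially unmixed. -/
def unmixed [DecidableEq V] (G : SimpleGraph V) : Prop :=
  G.Connected ∧ ∀ S : Finset V, cutSet G S → ncomp G S = S.card + 1

/-- `G` is accessible. -/
def accessible [DecidableEq V] (G : SimpleGraph V) : Prop :=
  unmixed G ∧ ∀ S : Finset V, cutSet G S → S ≠ ∅ → ∃ s ∈ S, cutSet G (S.erase s)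

/-- A block: connected with no cut vertices. -/
def isBlock [DecidableEq V] (G : SimpleGraph V) : Prop :=
  G.Connected ∧ ∀ v : V, ¬ cutSet G {v}

/-- The graph obtained from `B` by attaching a whisker (pendant leaf) at each `f i`. -/
def whisker {k : ℕ} (B : SimpleGraph V) (f : Fin k → V) : SimpleGraph (V ⊕ Fin k) :=
  SimpleGraph.fromRel (fun x y => match x, y with
    | Sum.inl a, Sum.inl b => B.Adj a b
    | Sum.inl a, Sum.inr i => a = f i
    | _, _ => False)

/-- A free vertex: a vertex contained in a unique maximal clique. -/
def freeVertex (G : SimpleGraph V) (v : V) : Prop :=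
  ∃! s : Set V, v ∈ s ∧ G.IsClique s ∧ ∀ t, G.IsClique t → s ⊆ t → s = t

/-!
Putting a vertex `s` back into `G \ S` merges exactly the components adjacent to `s`. Hence `S` is a
cut set iff each of its elements is adjacent to at least two components of `G \ S`, and in an
unmixed graph the number of such components is exactly two whenever `S \ {s}` is a cut set too.

Let `N = N_B(v)` and let `S ⊇ N` be a cut set of `G \ {v}`. In `G \ S` the vertex `v` and its
whisker form a component of their own, so `S` is a cut set of `G` and every element of `N` is
adjacent to at least three components. Accessibility therefore removes some `s ∈ S \ N` first, and
if `S = N ∪ {s}` then `s` carries no whisker. Each component of `G \ S` contains a vertex of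
`B \ S` or is a whisker at a vertex of `S`, so if `w` elements of `S \ N` carry whiskers, then
`|S| + 1 ≤ (n - |S|) + (r - 1) + w`. As `w + 2 ≤ 2 |S \ N|`, the bound follows.
-/

/-- The components of `G` outside `K` that contain a neighbour of `s`. -/
def adjComponents (G : SimpleGraph V) (K : Set V) (s : V) : Set (G.ComponentCompl K) :=
  {C | ∃ a ∈ C, G.Adj s a}

/-- `l` is a leaf of `G` attached at `v`, i.e. a whisker at `v` in a graph not presented as
`whisker B f`. -/
def IsLeafAt (G : SimpleGraph V) (l v : V) : Prop :=
  ∀ y, G.Adj l y ↔ y = v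

section Components

variable {G : SimpleGraph V} {K : Set V} {s v l x : V}

lemma componentCompl_subset_of_adj_closed {C : G.ComponentCompl K} {A : Set V} {a : V}
    (haC : a ∈ C) (haA : a ∈ A) (hA : ∀ x ∈ A, ∀ y ∉ K, G.Adj x y → y ∈ A) :
    (C : Set V) ⊆ A := by
  rintro b ⟨hb, rfl⟩
  obtain ⟨ha, hab⟩ := haC
  obtain ⟨p⟩ := ConnectedComponent.exact hab
  by_contra hbA
  obtain ⟨d, -, hd, hd'⟩ := p.exists_boundary_dart (Subtype.val ⁻¹' A) haA hbA
  exact hd' (hA _ hd _ d.snd.2 d.adj)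

lemma componentComplMk_mem_adjComponents_iff (hl : l ∉ K) (hlK : ∀ y, G.Adj l y → y ∈ K) :
    G.componentComplMk hl ∈ adjComponents G K s ↔ G.Adj s l := by
  refine ⟨fun ⟨a, ha, hsa⟩ ↦ ?_, fun h ↦ ⟨l, G.componentComplMk_mem hl, h⟩⟩
  have hsingle : (G.componentComplMk hl : Set V) ⊆ {l} :=
    componentCompl_subset_of_adj_closed (G.componentComplMk_mem hl) rfl <| by
      rintro _ rfl y hyK hly
      exact absurd (hlK y hly) hyK
  exact hsingle ha ▸ hsa

lemma hom_mem_adjComponents {L : Set V} (h : K ⊆ L) {C : G.ComponentCompl L}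
    (hC : C ∈ adjComponents G L x) : C.hom h ∈ adjComponents G K x :=
  let ⟨a, ha, hxa⟩ := hC
  ⟨a, C.subset_hom h ha, hxa⟩

lemma coe_hom_insert {C : G.ComponentCompl (insert s K)}
    (hC : C ∉ adjComponents G (insert s K) s) :
    (C.hom (Set.subset_insert s K) : Set V) = C := by
  obtain ⟨a, ha⟩ := C.nonempty
  refine (componentCompl_subset_of_adj_closed (C.subset_hom _ ha) ha ?_).antisymm
    (C.subset_hom _)
  intro x hx y hyK hxy
  have hys : y ≠ s := by
    rintro rfl
    exact hC ⟨x, hx, hxy.symm⟩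
  exact C.mem_of_adj x y hx (by simp [hys, hyK]) hxy

lemma hom_insert_eq_componentComplMk_iff (hs : s ∉ K) {C : G.ComponentCompl (insert s K)} :
    C.hom (Set.subset_insert s K) = G.componentComplMk hs ↔
      C ∈ adjComponents G (insert s K) s := by
  refine ⟨fun h ↦ ?_, fun ⟨a, ha, hsa⟩ ↦ ?_⟩
  · by_contra hC
    have hsC : s ∈ (C : Set V) := coe_hom_insert hC ▸ h ▸ G.componentComplMk_mem hs
    exact C.notMem_of_mem hsC (Set.mem_insert s K)
  · obtain ⟨_, h⟩ := ComponentCompl.mem_of_adj a s (C.subset_hom (Set.subset_insert s K) ha) hs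
      hsa.symm
    exact h.symm

lemma mem_adjComponents_of_hom_insert_eq {C D : G.ComponentCompl (insert s K)} (hCD : C ≠ D)
    (h : C.hom (Set.subset_insert s K) = D.hom (Set.subset_insert s K)) :
    C ∈ adjComponents G (insert s K) s := by
  by_contra hC
  obtain ⟨d, hd⟩ := D.nonempty
  have hdC : d ∈ (C : Set V) := coe_hom_insert hC ▸ h ▸ D.subset_hom _ hd
  exact Set.disjoint_left.1 (ComponentCompl.pairwise_disjoint hCD) hdC hd

lemma injOn_hom_insert {X : Set (G.ComponentCompl (insert s K))}
    (hX : (X ∩ adjComponents G (insert s K) s).Subsingleton) :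
    X.InjOn (ComponentCompl.hom (Set.subset_insert s K)) := by
  intro C hC D hD h
  by_contra hCD
  exact hCD (hX ⟨hC, mem_adjComponents_of_hom_insert_eq hCD h⟩
    ⟨hD, mem_adjComponents_of_hom_insert_eq (Ne.symm hCD) h.symm⟩)

lemma bijOn_hom_insert (hs : s ∉ K) :
    Set.BijOn (ComponentCompl.hom (Set.subset_insert s K))
      (adjComponents G (insert s K) s)ᶜ {G.componentComplMk hs}ᶜ := by
  refine ⟨fun C hC ↦ mt (hom_insert_eq_componentComplMk_iff hs).1 hC,
    injOn_hom_insert (by simp), fun D hD ↦ ?_⟩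
  obtain ⟨d, hd, rfl⟩ := D.exists_eq_mk
  have hds : d ∉ insert s K := by
    rintro (rfl | h)
    exacts [hD rfl, hd h]
  exact ⟨G.componentComplMk hds, mt (hom_insert_eq_componentComplMk_iff hs).2 hD, rfl⟩

lemma IsLeafAt.disjoint_adjComponents (hl : IsLeafAt G l v)
    (hv : ∀ y, G.Adj v y → y = l ∨ y ∈ K) (hsv : s ≠ v) :
    Disjoint (adjComponents G (insert v K) s) (adjComponents G (insert v K) v) := by
  rw [Set.disjoint_left]
  rintro _ hs ⟨a, ⟨haK, rfl⟩, hva⟩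
  obtain rfl : a = l := (hv a hva).resolve_right fun h ↦ haK (Set.mem_insert_of_mem v h)
  have hleaf : ∀ y, G.Adj a y → y ∈ insert v K := fun y h ↦ Or.inl ((hl y).1 h)
  rw [componentComplMk_mem_adjComponents_iff haK hleaf] at hs
  exact hsv ((hl s).1 hs.symm)

variable [Finite V]

theorem card_componentCompl_insert_add_one (hs : s ∉ K) :
    Nat.card (G.ComponentCompl (insert s K)) + 1 =
      Nat.card (G.ComponentCompl K) + (adjComponents G (insert s K) s).ncard := by
  have hbij := (bijOn_hom_insert (G := G) hs).ncard_eq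
  have hadj := Set.ncard_add_ncard_compl (adjComponents G (insert s K) s)
  have hsingle := Set.ncard_add_ncard_compl {G.componentComplMk hs}
  rw [Set.ncard_singleton] at hsingle
  omega

lemma ncard_adjComponents_insert_le
    (h : (adjComponents G (insert s K) x ∩ adjComponents G (insert s K) s).Subsingleton) :
    (adjComponents G (insert s K) x).ncard ≤ (adjComponents G K x).ncard :=
  Set.ncard_le_ncard_of_injOn _ (fun _ ↦ hom_mem_adjComponents _) (injOn_hom_insert h)

lemma ncard_adjComponents_insert_le_of_disjoint (hs : s ∉ K)
    (h : Disjoint (adjComponents G (insert s K) x) (adjComponents G (insert s K) s)) :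
    (adjComponents G (insert s K) x).ncard ≤
      (adjComponents G K x \ {G.componentComplMk hs}).ncard :=
  Set.ncard_le_ncard_of_injOn _
    (fun _ hC ↦ ⟨hom_mem_adjComponents _ hC,
      mt (hom_insert_eq_componentComplMk_iff hs).1 (Set.disjoint_left.1 h hC)⟩)
    (injOn_hom_insert (by simp [h.inter_eq]))

end Components

section CutSets

variable [DecidableEq V] {G : SimpleGraph V} {S : Finset V} {s v l : V}

lemma ncomp_induce_ne (G : SimpleGraph V) (S : Finset {x // x ≠ v}) :
    ncomp (G.induce {x | x ≠ v}) S = ncomp G (insert v (S.image Subtype.val)) := by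
  let e : (G.induce {x | x ≠ v}).induce {x | x ∉ S} ≃g
      G.induce {x | x ∉ insert v (S.image Subtype.val)} :=
    { toFun := fun x ↦ ⟨x.1.1, by simpa using ⟨x.1.2, fun _ ↦ x.2⟩⟩
      invFun := fun y ↦ ⟨⟨y.1, fun h ↦ y.2 (by simp [h])⟩,
        fun h ↦ y.2 (mem_insert_of_mem (mem_image_of_mem Subtype.val h))⟩
      map_rel_iff' := Iff.rfl }
  exact Nat.card_congr e.connectedComponentEquiv

variable [Finite V]

lemma ncomp_add_one_eq (G : SimpleGraph V) (hs : s ∈ S) :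
    ncomp G S + 1 = ncomp G (S.erase s) + (adjComponents G S s).ncard := by
  have h := card_componentCompl_insert_add_one (G := G) (S.notMem_erase s)
  rwa [← coe_insert, insert_erase hs] at h

lemma cutSet_iff_one_lt_ncard_adjComponents :
    cutSet G S ↔ ∀ s ∈ S, 1 < (adjComponents G S s).ncard := by
  have hiff : ∀ s ∈ S, ncomp G (S.erase s) < ncomp G S ↔ 1 < (adjComponents G S s).ncard := by
    intro s hs
    have := ncomp_add_one_eq G hs
    omega
  rw [cutSet, or_iff_right_of_imp (by rintro rfl; simp)]
  exact forall₂_congr hiff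

lemma unmixed.ncard_adjComponents_eq_two (hG : unmixed G) (hs : s ∈ S) (hS : cutSet G S)
    (hS' : cutSet G (S.erase s)) : (adjComponents G S s).ncard = 2 := by
  have hcount := ncomp_add_one_eq G hs
  rw [hG.2 S hS, hG.2 _ hS', card_erase_add_one hs] at hcount
  omega

/-- Of the two components at `s`, one is the leaf, so putting `s` back merges no two components
at a vertex `x ≠ s`. -/
lemma accessible.exists_ncard_adjComponents_le_two (hG : accessible G) (hs : s ∈ S)
    (hS : cutSet G S) (hS' : cutSet G (S.erase s)) (hne : (S.erase s).Nonempty)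
    (hl : IsLeafAt G l s) (hlS : l ∉ S) :
    ∃ x ∈ S.erase s, (adjComponents G S x).ncard ≤ 2 := by
  obtain ⟨x, hx, hx'⟩ := hG.2 _ hS' hne.ne_empty
  have htwo := hG.1.ncard_adjComponents_eq_two hs hS hS'
  have hleaf : ∀ {y}, G.componentComplMk hlS ∈ adjComponents G S y ↔ G.Adj y l :=
    componentComplMk_mem_adjComponents_iff hlS fun y h ↦ (hl y).1 h ▸ hs
  have hone : (adjComponents G S s \ {G.componentComplMk hlS}).ncard ≤ 1 := by
    rw [Set.ncard_sdiff_singleton_of_mem (hleaf.2 ((hl s).2 rfl).symm), htwo]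
  have hsub : (adjComponents G S x ∩ adjComponents G S s).Subsingleton := by
    refine (Set.ncard_le_one_iff_subsingleton.1 hone).anti fun C hC ↦ ⟨hC.2, ?_⟩
    rintro rfl
    exact ne_of_mem_erase hx ((hl x).1 (hleaf.1 hC.1).symm)
  have hins : insert s (S.erase s : Set V) = S := by rw [← coe_insert, insert_erase hs]
  refine ⟨x, hx, ?_⟩
  calc (adjComponents G S x).ncard
      ≤ (adjComponents G (S.erase s) x).ncard := by
        have h := ncard_adjComponents_insert_le (G := G) (K := S.erase s) (s := s) (x := x)
        rw [hins] at h
        exact h hsub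
    _ ≤ 2 := (hG.1.ncard_adjComponents_eq_two hx hS' hx').le

lemma one_lt_ncard_adjComponents_of_cutSet_induce {S : Finset {x // x ≠ v}}
    (hS : cutSet (G.induce {x | x ≠ v}) S) (hs : s ∈ S.image Subtype.val) :
    1 < (adjComponents G (insert v (S.image Subtype.val : Set V)) s).ncard := by
  obtain ⟨s, hsS, rfl⟩ := mem_image.1 hs
  have hlt := hS.resolve_left (ne_empty_of_mem hsS) s hsS
  have herase : insert v ((S.erase s).image Subtype.val) =
      (insert v (S.image Subtype.val)).erase s.1 := by
    rw [image_erase Subtype.val_injective, erase_insert_of_ne s.2.symm]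
  rw [ncomp_induce_ne, ncomp_induce_ne, herase] at hlt
  have hcount := ncomp_add_one_eq G (mem_insert_of_mem (b := v) hs)
  rw [coe_insert] at hcount
  omega

theorem IsLeafAt.cutSet_of_cutSet_induce (hl : IsLeafAt G l v) {S : Finset {x // x ≠ v}}
    (hS : cutSet (G.induce {x | x ≠ v}) S)
    (hv : ∀ y, G.Adj v y → y = l ∨ y ∈ S.image Subtype.val) :
    cutSet G (S.image Subtype.val) ∧ ∀ s ∈ S.image Subtype.val, G.Adj v s →
      2 < (adjComponents G (S.image Subtype.val : Finset V) s).ncard := by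
  have hvS : v ∉ S.image Subtype.val := by simp
  have htwo : ∀ s ∈ S.image Subtype.val, 1 < (adjComponents G (S.image Subtype.val : Finset V) s \
      {G.componentComplMk hvS}).ncard := fun s hs ↦
    (one_lt_ncard_adjComponents_of_cutSet_induce hS hs).trans_le <|
      ncard_adjComponents_insert_le_of_disjoint hvS <|
        hl.disjoint_adjComponents hv (ne_of_mem_of_not_mem hs hvS)
  refine ⟨cutSet_iff_one_lt_ncard_adjComponents.2 fun s hs ↦
    (htwo s hs).trans_le (Set.ncard_sdiff_singleton_le _ _), fun s hs hvs ↦ ?_⟩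
  have hmem : G.componentComplMk hvS ∈ adjComponents G (S.image Subtype.val : Finset V) s :=
    ⟨v, G.componentComplMk_mem hvS, hvs.symm⟩
  have := Set.ncard_sdiff_singleton_add_one hmem
  have := htwo s hs
  omega

end CutSets

section Whisker

variable {k : ℕ} {B : SimpleGraph V} {f : Fin k → V}

lemma whisker_adj_inl_inl {a b : V} :
    (whisker B f).Adj (Sum.inl a) (Sum.inl b) ↔ B.Adj a b := by
  simp only [whisker, fromRel_adj, ne_eq, Sum.inl.injEq, B.adj_comm b a, or_self]
  exact and_iff_right_of_imp Adj.ne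

lemma whisker_adj_inl_inr {a : V} {j : Fin k} :
    (whisker B f).Adj (Sum.inl a) (Sum.inr j) ↔ a = f j := by
  simp [whisker]

lemma isLeafAt_whisker (B : SimpleGraph V) (f : Fin k → V) (j : Fin k) :
    IsLeafAt (whisker B f) (Sum.inr j) (Sum.inl (f j)) := by
  rintro (a | m)
  · rw [adj_comm, whisker_adj_inl_inr, Sum.inl.injEq]
  · simp [whisker]

variable [DecidableEq V]

lemma exists_eq_map_inl_of_cutSet_whisker [Finite V] {S : Finset (V ⊕ Fin k)}
    (hS : cutSet (whisker B f) S) : ∃ T : Finset V, S = T.map .inl := by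
  suffices hleaf : ∀ j, Sum.inr j ∉ S by
    refine ⟨S.toLeft, ?_⟩
    ext (u | j) <;> simp [hleaf]
  intro j hj
  obtain ⟨_, ⟨a, ⟨haS, rfl⟩, hja⟩, _, ⟨b, ⟨hbS, rfl⟩, hjb⟩, hab⟩ :=
    (Set.one_lt_ncard).1 (cutSet_iff_one_lt_ncard_adjComponents.1 hS _ hj)
  rw [isLeafAt_whisker B f j] at hja hjb
  subst hja hjb
  exact hab rfl

lemma ncomp_whisker_le [Fintype V] (B : SimpleGraph V) (f : Fin k → V) (T : Finset V) :
    ncomp (whisker B f) (T.map .inl) ≤ #Tᶜ + #{j | f j ∈ T} := by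
  have hinl : ∀ u ∉ T, Sum.inl u ∉ (T.map .inl : Finset (V ⊕ Fin k)) := by simp
  have hinr : ∀ j, Sum.inr j ∉ (T.map .inl : Finset (V ⊕ Fin k)) := by simp
  let g : (Tᶜ : Finset V) ⊕ ({j | f j ∈ T} : Finset (Fin k)) →
      (whisker B f).ComponentCompl (T.map .inl : Finset (V ⊕ Fin k)) :=
    Sum.elim (fun u ↦ componentComplMk _ (hinl u (mem_compl.1 u.2)))
      (fun j ↦ componentComplMk _ (hinr j))
  have hg : Function.Surjective g := by
    intro C
    obtain ⟨u | j, h, rfl⟩ := C.exists_eq_mk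
    · exact ⟨.inl ⟨u, mem_compl.2 fun hu ↦ h (mem_map_of_mem _ hu)⟩, rfl⟩
    · by_cases hj : f j ∈ T
      · exact ⟨.inr ⟨j, by simpa using hj⟩, rfl⟩
      · exact ⟨.inl ⟨f j, mem_compl.2 hj⟩,
          componentComplMk_eq_of_adj _ _ _ (whisker_adj_inl_inr.2 rfl)⟩
  have hcard := Nat.card_le_card_of_surjective g hg
  rwa [Nat.card_sum, Nat.card_eq_finsetCard, Nat.card_eq_finsetCard] at hcard

lemma two_mul_card_add_one_le_of_cutSet_whisker [Fintype V] (hG : unmixed (whisker B f))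
    {T : Finset V} (hT : cutSet (whisker B f) (T.map .inl)) :
    2 * #T + 1 ≤ Fintype.card V + #{j | f j ∈ T} := by
  have hle := ncomp_whisker_le B f T
  rw [hG.2 _ hT, card_map] at hle
  have := card_add_card_compl T
  omega

/-- Accessibility removes some `s ∈ T \ N` first; if `T \ N = {s}`, it then has to remove an
element of `N`, which a whisker at `s` would prevent. -/
lemma card_filter_mem_sdiff_add_two_le [Finite V] (hf : Function.Injective f)
    (hG : accessible (whisker B f)) {T N : Finset V} (hT : cutSet (whisker B f) (T.map .inl))
    (hNT : N ⊆ T) (hN : N.Nonempty)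
    (hthree : ∀ u ∈ N, 2 < (adjComponents (whisker B f)
      (T.map .inl : Finset (V ⊕ Fin k)) (Sum.inl u)).ncard) :
    #{j | f j ∈ T \ N} + 2 ≤ 2 * #(T \ N) := by
  obtain ⟨_, hs, hT'⟩ := hG.2 _ hT (map_nonempty.2 (hN.mono hNT)).ne_empty
  obtain ⟨s, hsT, rfl⟩ := mem_map.1 hs
  have hsN : s ∉ N := fun h ↦
    (hthree s h).ne' (hG.1.ncard_adjComponents_eq_two hs hT hT')
  have hsD : s ∈ T \ N := mem_sdiff.2 ⟨hsT, hsN⟩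
  have hle : #{j | f j ∈ T \ N} ≤ #(T \ N) :=
    card_le_card_of_injOn f (by simp [Set.MapsTo]) hf.injOn
  obtain hD | hD := (one_le_card.2 ⟨s, hsD⟩).eq_or_lt
  · have hD : T \ N = {s} :=
      eq_singleton_iff_unique_mem.2 ⟨hsD, fun y hy ↦ card_le_one.1 hD.ge y hy s hsD⟩
    have herase : T.erase s = N := by rw [erase_eq, ← hD, Finset.sdiff_sdiff_eq_self hNT]
    have hzero : ∀ j, f j ≠ s := by
      rintro j rfl
      have hmap : (T.map .inl).erase (Sum.inl (f j)) = N.map (.inl : V ↪ V ⊕ Fin k) := by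
        rw [← herase, map_erase, Function.Embedding.inl_apply]
      obtain ⟨x, hx, hx_le⟩ := hG.exists_ncard_adjComponents_le_two hs hT hT'
        (hmap ▸ map_nonempty.2 hN) (isLeafAt_whisker B f j) (by simp)
      obtain ⟨u, hu, rfl⟩ := mem_map.1 (hmap ▸ hx)
      exact (hthree u hu).not_ge hx_le
    simp [hD, hzero]
  · omega

theorem two_mul_card_add_three_le_of_two_lt_ncard_adjComponents [Fintype V]
    (hf : Function.Injective f) (hG : accessible (whisker B f)) {T N : Finset V}
    (hT : cutSet (whisker B f) (T.map .inl)) (hNT : N ⊆ T) (hN : N.Nonempty)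
    (hthree : ∀ u ∈ N, 2 < (adjComponents (whisker B f)
      (T.map .inl : Finset (V ⊕ Fin k)) (Sum.inl u)).ncard) :
    2 * #N + 3 ≤ Fintype.card V + #{j | f j ∈ N} := by
  have hcount := two_mul_card_add_one_le_of_cutSet_whisker hG.1 hT
  have hextra := card_filter_mem_sdiff_add_two_le hf hG hT hNT hN hthree
  have hcard := card_sdiff_add_card_eq_card hNT
  have hsplit : #{j | f j ∈ T} ≤ #{j | f j ∈ T \ N} + #{j | f j ∈ N} := by
    refine (card_le_card fun j hj ↦ ?_).trans (card_union_le _ _)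
    by_cases hjN : f j ∈ N <;> simp_all
  omega

end Whisker

theorem bound_neighbourhood_general [Fintype V] [DecidableEq V] {k : ℕ}
    (B : SimpleGraph V) [DecidableRel B.Adj]
    (f : Fin k → V) (hf : Function.Injective f)
    (hacc : accessible (whisker B f)) (i : Fin k)
    (hsep : ∃ S : Finset {x : V ⊕ Fin k // x ≠ Sum.inl (f i)},
      cutSet ((whisker B f).induce {x | x ≠ Sum.inl (f i)}) S ∧
      ∀ u, B.Adj (f i) u → Sum.inl u ∈ S.image Subtype.val) :
    #(B.neighborFinset (f i)) ≤ (Fintype.card V + (#{j | B.Adj (f i) (f j)} + 1)) / 2 - 2 ∧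
    #(B.neighborFinset (f i)) ≤ (Fintype.card V + k) / 2 - 2 := by
  have hr : #{j | B.Adj (f i) (f j)} < k := by
    simpa using card_lt_univ_of_notMem (s := {j | B.Adj (f i) (f j)}) (x := i) (by simp)
  obtain hN | hN := (B.neighborFinset (f i)).eq_empty_or_nonempty
  · -- When `B` is a single vertex, the bound holds only because subtraction truncates at `0`.
    simp [hN]
  obtain ⟨S, hS, hNS⟩ := hsep
  have hv : ∀ y, (whisker B f).Adj (Sum.inl (f i)) y →
      y = Sum.inr i ∨ y ∈ S.image Subtype.val := by
    rintro (u | j) h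
    · exact .inr (hNS u (whisker_adj_inl_inl.1 h))
    · exact .inl (congrArg Sum.inr (hf (whisker_adj_inl_inr.1 h)).symm)
  obtain ⟨hcut, hthree⟩ := (isLeafAt_whisker B f i).cutSet_of_cutSet_induce hS hv
  obtain ⟨T, hT⟩ := exists_eq_map_inl_of_cutSet_whisker hcut
  rw [hT] at hcut hthree hNS
  have hNT : B.neighborFinset (f i) ⊆ T := fun u hu ↦ by
    simpa using hNS u ((B.mem_neighborFinset _ _).1 hu)
  have hbound := two_mul_card_add_three_le_of_two_lt_ncard_adjComponents hf hacc hcut hNT hN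
    fun u hu ↦ hthree _ (mem_map_of_mem _ (hNT hu))
      (whisker_adj_inl_inl.2 ((B.mem_neighborFinset _ _).1 hu))
  simp only [mem_neighborFinset] at hbound
  omega

theorem bound_neighbourhood [Fintype V] [DecidableEq V] {k : ℕ}
    (B : SimpleGraph V) [DecidableRel B.Adj] (hB : isBlock B)
    (f : Fin k → V) (hf : Function.Injective f)
    (hacc : accessible (whisker B f))
    (hyp : ∀ j : Fin k, ∃ S : Finset {x : V ⊕ Fin k // x ≠ Sum.inl (f j)},
      cutSet ((whisker B f).induce {x | x ≠ Sum.inl (f j)}) S ∧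
      ∀ u, B.Adj (f j) u → Sum.inl u ∈ S.image Subtype.val)
    (i : Fin k) :
    (B.neighborFinset (f i)).card ≤
      (Fintype.card V + ((Finset.univ.filter fun j : Fin k => B.Adj (f i) (f j)).card + 1)) / 2 - 2 ∧
    (B.neighborFinset (f i)).card ≤ (Fintype.card V + k) / 2 - 2 :=
  bound_neighbourhood_general B f hf hacc i (hyp i)
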